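/- The five-element subalgebra {⊥, t, a, f, ⊤} of the crystal lattice C (with the operations ∧, ∨, ¬, · inherited from C) is simple: its only congruences are the identity relation and the full relation. The same holds for the subalgebra {⊥, t, b, f, ⊤}. -/

import Mathlib

/-- The universe of the crystal lattice `C`: six elements `⊥, t, a, b, f, ⊤`. -/
inductive Cry : Type
  | bot | t | a | b | f | top
  deriving DecidableEq

namespace Cry

/-- The lattice order of `C`: `⊥ < t < a < f < ⊤` and `t < b < f`, with `a, b` incomparable. -/
def leb : Cry → Cry → Bool
  | bot, _ => true
  | _, top => true
  | t, bot => false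
  | t, _ => true
  | a, a => true
  | a, f => true
  | a, _ => false
  | b, b => true
  | b, f => true
  | b, _ => false
  | f, f => true
  | f, _ => false
  | top, _ => false

/-- Meet: the only incomparable pair is `{a, b}`, whose meet is `t`. -/
def meet (x y : Cry) : Cry := if leb x y then x else if leb y x then y else t

/-- Join: the only incomparable pair is `{a, b}`, whose join is `f`. -/
def join (x y : Cry) : Cry := if leb x y then y else if leb y x then x else f

/-- The involution `¬`. -/
def neg : Cry → Cry
  | bot => top
  | t => f
  | a => a
  | b => b
  | f => t
  | top => bot

/-- Fusion `·`: commutative with identity `t`; `⊥·x = ⊥`; `⊤·x = ⊤` for `x ≠ ⊥`;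
`a·a = a`; `b·b = b`; and `a·b = a·f = b·f = f·f = ⊤`. -/
def fus : Cry → Cry → Cry
  | bot, _ => bot
  | _, bot => bot
  | top, _ => top
  | _, top => top
  | t, x => x
  | x, t => x
  | a, a => a
  | b, b => b
  | _, _ => top

/-- A subalgebra of `C`: a nonempty subset closed under `∧`, `∨`, `·`, and `¬`. -/
def IsSubalg (S : Set Cry) : Prop :=
  S.Nonempty ∧
  (∀ x ∈ S, ∀ y ∈ S, meet x y ∈ S ∧ join x y ∈ S ∧ fus x y ∈ S) ∧
  (∀ x ∈ S, neg x ∈ S)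

/-- A congruence on the subset `S` (with the operations inherited from `C`):
an equivalence relation on `S` compatible with `∧`, `∨`, `·`, and `¬`. -/
def IsCongOn (S : Set Cry) (r : Cry → Cry → Prop) : Prop :=
  (∀ x ∈ S, r x x) ∧
  (∀ x ∈ S, ∀ y ∈ S, r x y → r y x) ∧
  (∀ x ∈ S, ∀ y ∈ S, ∀ z ∈ S, r x y → r y z → r x z) ∧
  (∀ x ∈ S, ∀ y ∈ S, ∀ u ∈ S, ∀ v ∈ S, r x y → r u v →
      r (meet x u) (meet y v) ∧ r (join x u) (join y v) ∧ r (fus x u) (fus y v)) ∧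
  (∀ x ∈ S, ∀ y ∈ S, r x y → r (neg x) (neg y))

end Cry

/-!
If `x ≰ y` in `C`, then `x · ¬y = ⊤`, while `y · ¬y` is never `⊤`. Hence a congruence identifying
distinct elements, one of which is not below the other, identifies `⊤` with some `z ≠ ⊤`. Negating
gives `⊥ ~ ¬z` with `¬z ≠ ⊥`, fusing with `⊤` gives `⊥ ~ ⊤`, and meeting with an arbitrary element
collapses everything. This works in every subalgebra of `C`.
-/

namespace Cry

theorem leb_antisymm {x y : Cry} : leb x y → leb y x → x = y := by
  cases x <;> cases y <;> decide

theorem meet_bot (x : Cry) : meet x bot = bot := by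
  cases x <;> rfl

theorem meet_top (x : Cry) : meet x top = x := by
  cases x <;> rfl

theorem fus_neg_eq_top_of_not_leb {x y : Cry} : ¬ leb x y → fus x (neg y) = top := by
  cases x <;> cases y <;> decide

theorem fus_neg_self_ne_top (x : Cry) : fus x (neg x) ≠ top := by
  cases x <;> decide

theorem fus_neg_top_of_ne_top {x : Cry} : x ≠ top → fus (neg x) top = top := by
  cases x <;> decide

theorem isSubalg_bot_t_f_top_with (c : Cry) : IsSubalg {bot, t, c, f, top} := by
  refine ⟨⟨bot, by simp⟩, ?_, ?_⟩
  · intro x hx y hy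
    simp only [Set.mem_insert_iff, Set.mem_singleton_iff] at hx hy ⊢
    revert hx hy
    cases c <;> cases x <;> cases y <;> decide
  · intro x hx
    simp only [Set.mem_insert_iff, Set.mem_singleton_iff] at hx ⊢
    revert hx
    cases c <;> cases x <;> decide

namespace IsSubalg

variable {S : Set Cry} {x y : Cry}

theorem neg_mem (hS : IsSubalg S) (hx : x ∈ S) : neg x ∈ S :=
  hS.2.2 x hx

theorem fus_mem (hS : IsSubalg S) (hx : x ∈ S) (hy : y ∈ S) : fus x y ∈ S :=
  (hS.2.1 x hx y hy).2.2

theorem bot_mem_of_top_mem (hS : IsSubalg S) (htop : top ∈ S) : bot ∈ S :=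
  hS.neg_mem htop

end IsSubalg

namespace IsCongOn

variable {S : Set Cry} {r : Cry → Cry → Prop} {x y z : Cry}

theorem refl (hr : IsCongOn S r) (hx : x ∈ S) : r x x :=
  hr.1 x hx

theorem symm (hr : IsCongOn S r) (hx : x ∈ S) (hy : y ∈ S) (hxy : r x y) : r y x :=
  hr.2.1 x hx y hy hxy

theorem trans (hr : IsCongOn S r) (hx : x ∈ S) (hy : y ∈ S) (hz : z ∈ S)
    (hxy : r x y) (hyz : r y z) : r x z :=
  hr.2.2.1 x hx y hy z hz hxy hyz

theorem rel_neg (hr : IsCongOn S r) (hx : x ∈ S) (hy : y ∈ S) (hxy : r x y) :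
    r (neg x) (neg y) :=
  hr.2.2.2.2 x hx y hy hxy

theorem rel_meet_left (hr : IsCongOn S r) (hx : x ∈ S) (hy : y ∈ S) (hz : z ∈ S) (hxy : r x y) :
    r (meet z x) (meet z y) :=
  (hr.2.2.2.1 z hz z hz x hx y hy (hr.refl hz) hxy).1

theorem rel_fus_right (hr : IsCongOn S r) (hx : x ∈ S) (hy : y ∈ S) (hz : z ∈ S) (hxy : r x y) :
    r (fus x z) (fus y z) :=
  (hr.2.2.2.1 x hx y hy z hz z hz hxy (hr.refl hz)).2.2

theorem rel_of_bot_top (hr : IsCongOn S r) (hbot : bot ∈ S) (htop : top ∈ S)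
    (hbt : r bot top) (hx : x ∈ S) (hy : y ∈ S) : r x y := by
  have bot_rel {z : Cry} (hz : z ∈ S) : r bot z := by
    simpa only [meet_bot, meet_top] using hr.rel_meet_left hbot htop hz hbt
  exact hr.trans hx hbot hy (hr.symm hbot hx (bot_rel hx)) (bot_rel hy)

theorem bot_top_of_top_rel (hr : IsCongOn S r) (hS : IsSubalg S) (htop : top ∈ S) (hz : z ∈ S)
    (hz_ne : z ≠ top) (h : r top z) : r bot top := by
  have bot_rel_neg : r bot (neg z) := hr.rel_neg htop hz h
  have fused : r (fus bot top) (fus (neg z) top) :=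
    hr.rel_fus_right (hS.bot_mem_of_top_mem htop) (hS.neg_mem hz) htop bot_rel_neg
  rwa [fus_neg_top_of_ne_top hz_ne] at fused

theorem rel_of_rel_of_not_leb (hr : IsCongOn S r) (hS : IsSubalg S) (hx : x ∈ S) (hy : y ∈ S)
    (hxy : r x y) (hle : ¬ leb x y) {u v : Cry} (hu : u ∈ S) (hv : v ∈ S) : r u v := by
  have fus_eq_top : fus x (neg y) = top := fus_neg_eq_top_of_not_leb hle
  have htop : top ∈ S := fus_eq_top ▸ hS.fus_mem hx (hS.neg_mem hy)
  have top_rel : r top (fus y (neg y)) :=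
    fus_eq_top ▸ hr.rel_fus_right hx hy (hS.neg_mem hy) hxy
  have bot_top : r bot top :=
    hr.bot_top_of_top_rel hS htop (hS.fus_mem hy (hS.neg_mem hy)) (fus_neg_self_ne_top y) top_rel
  exact hr.rel_of_bot_top (hS.bot_mem_of_top_mem htop) htop bot_top hu hv

theorem rel_of_rel_of_ne (hr : IsCongOn S r) (hS : IsSubalg S) (hx : x ∈ S) (hy : y ∈ S)
    (hxy : r x y) (hne : x ≠ y) {u v : Cry} (hu : u ∈ S) (hv : v ∈ S) : r u v := by
  by_cases hle : leb x y
  · have hge : ¬ leb y x := fun h => hne (leb_antisymm hle h)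
    exact hr.rel_of_rel_of_not_leb hS hy hx (hr.symm hx hy hxy) hge hu hv
  · exact hr.rel_of_rel_of_not_leb hS hx hy hxy hle hu hv

end IsCongOn

end Cry

theorem five_element_simple_general {S : Set Cry} (hS : Cry.IsSubalg S) (r : Cry → Cry → Prop)
    (hr : Cry.IsCongOn S r) :
    (∀ x ∈ S, ∀ y ∈ S, r x y ↔ x = y) ∨ (∀ x ∈ S, ∀ y ∈ S, r x y) := by
  by_cases hid : ∀ x ∈ S, ∀ y ∈ S, r x y → x = y
  · exact .inl fun x hx y hy => ⟨hid x hx y hy, fun h => h ▸ hr.refl hx⟩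
  · push Not at hid
    obtain ⟨x, hx, y, hy, hxy, hne⟩ := hid
    exact .inr fun u hu v hv => hr.rel_of_rel_of_ne hS hx hy hxy hne hu hv

/-- The five-element subalgebras `{⊥, t, a, f, ⊤}` and `{⊥, t, b, f, ⊤}` of `C` are simple. -/
theorem five_element_simple :
    (∀ r : Cry → Cry → Prop, Cry.IsCongOn {Cry.bot, Cry.t, Cry.a, Cry.f, Cry.top} r →
      (∀ x ∈ ({Cry.bot, Cry.t, Cry.a, Cry.f, Cry.top} : Set Cry),
        ∀ y ∈ ({Cry.bot, Cry.t, Cry.a, Cry.f, Cry.top} : Set Cry), r x y ↔ x = y) ∨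
      (∀ x ∈ ({Cry.bot, Cry.t, Cry.a, Cry.f, Cry.top} : Set Cry),
        ∀ y ∈ ({Cry.bot, Cry.t, Cry.a, Cry.f, Cry.top} : Set Cry), r x y)) ∧
    (∀ r : Cry → Cry → Prop, Cry.IsCongOn {Cry.bot, Cry.t, Cry.b, Cry.f, Cry.top} r →
      (∀ x ∈ ({Cry.bot, Cry.t, Cry.b, Cry.f, Cry.top} : Set Cry),
        ∀ y ∈ ({Cry.bot, Cry.t, Cry.b, Cry.f, Cry.top} : Set Cry), r x y ↔ x = y) ∨
      (∀ x ∈ ({Cry.bot, Cry.t, Cry.b, Cry.f, Cry.top} : Set Cry),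
        ∀ y ∈ ({Cry.bot, Cry.t, Cry.b, Cry.f, Cry.top} : Set Cry), r x y)) := by
  exact ⟨five_element_simple_general (Cry.isSubalg_bot_t_f_top_with Cry.a),
    five_element_simple_general (Cry.isSubalg_bot_t_f_top_with Cry.b)⟩
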